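/- There exists x* > 0 at which q_s attains its maximum, i.e. q_s(x) ≤ q_s(x*) for all x > 0; moreover, setting q_max := q_s(x*), for every q ∈ (1, q_max] the level set L(q) = {x > 0 : q_s(x) = q} is nonempty and has both a smallest element and a largest element. -/

import Mathlib

/-!
The proof rests on three properties of `q_s` on `(0, ∞)`.

* `x ↦ x q_s(x)` is nondecreasing (`mul_qs_mono`). A sequence `d` that is a unique expansion in
  base `q` remains one in every larger base (`univoque_mono`), while its value decreases at least
  as fast as `1/q` (`val_scale`). So a unique expansion of `y` in base `q` becomes one of `x ≤ y` in
  some base at most `q y / x`. Hence `q_s` is lower semicontinuous from the right and has no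
  downward jumps.

* `q_s` is upper semicontinuous from the right (`qs_right_usc`). Let `x` have the unique expansion
  `d` in base `q`. If `d` is still univoque in a smaller base, then all `y` slightly above `x` are
  represented by `d` in bases slightly below `q`. Otherwise the orbit of `x` comes arbitrarily close
  to the switch region `[1/q, 1/(q(q-1))]`, and replacing a late tail of `d` by another tail of `d`
  of larger value gives univoque sequences above `d` that agree with it to many digits
  (`approx_above`). The tails are chosen at record positions, so that the earlier constraints
  survive. These sequences represent all `y` slightly above `x` in bases slightly above `q`.

* `q_s(x) ≤ 1 + 1/x` for `x ≥ 1`, and `q_s(x)` exceeds the golden ratio for `x < 1/2` and tends to it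
  as `x → 0` (`qG_lt_qs`, `qs_lt_near_zero`). For such `x` and bases at most `7/4` the only candidates
  are the sequences `0^k(10)^∞`, which are univoque exactly in the bases above the golden ratio.

The maximum is then attained by upper semicontinuity on a compact interval. The largest element of
`L(q)` is the supremum of `{x > 0 : q_s(x) ≥ q}`. The infimum of `L(q)` is positive, because near `0`
the values of `q_s` are larger than the golden ratio but eventually smaller than any larger number,
and it belongs to `L(q)` by continuity from the right.
-/

open Filter Set

noncomputable section

/-- `d` is a `q`-expansion of `x`: all digits lie in `{0,1}` and
`x = ∑_{i=1}^∞ d_i q^{-i}`.  Here `d i` stands for the digit `d_{i+1}`. -/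
def IsExpansion (q x : ℝ) (d : ℕ → ℕ) : Prop :=
  (∀ i, d i ≤ 1) ∧ x = ∑' i : ℕ, (d i : ℝ) / q ^ (i + 1)

/-- `𝒰(x)`: the set of bases `q ∈ (1,2]` in which `x` has a unique expansion. -/
def UnivSet (x : ℝ) : Set ℝ :=
  {q | q ∈ Set.Ioc (1 : ℝ) 2 ∧ ∃! d : ℕ → ℕ, IsExpansion q x d}

/-- `q_s(x) = inf 𝒰(x)`. -/
def qs (x : ℝ) : ℝ := sInf (UnivSet x)

/-- The level set `L(q) = {x > 0 : q_s(x) = q}`. -/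
def levelSet (q : ℝ) : Set ℝ := {x | 0 < x ∧ qs x = q}

/-- The golden ratio `q_G = (1+√5)/2`. -/
def qG : ℝ := (1 + Real.sqrt 5) / 2

/-- The Thue–Morse sequence: `tm i = s_i mod 2`, where `s_i` is the number of
`1`s in the binary representation of `i`. -/
def tm (i : ℕ) : ℕ := (Nat.digits 2 i).sum % 2

/-- The set `S ⊆ ℕ`: `2, 3, 4 ∈ S`, and for `k ≥ 2` and `2^k < n ≤ 2^{k+1}`,
`n ∈ S` iff `n > 3·2^{k-1}` and `n - 3·2^{k-1} ∈ S`; no other elements. -/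
inductive memS : ℕ → Prop
  | two : memS 2
  | three : memS 3
  | four : memS 4
  | step (k n : ℕ) (hk : 2 ≤ k) (h1 : 2 ^ k < n) (h2 : n ≤ 2 ^ (k + 1))
      (h3 : 3 * 2 ^ (k - 1) < n) (h : memS (n - 3 * 2 ^ (k - 1))) : memS n

open scoped Topology

/-! ### Values of digit sequences and the univoque condition -/

/-- Value of a digit sequence in base `q`; `d i` is the digit of weight `q^{-(i+1)}`. -/
def val (q : ℝ) (d : ℕ → ℕ) : ℝ := ∑' i : ℕ, (d i : ℝ) / q ^ (i + 1)

/-- The sequence `d` with its first `n` digits removed. -/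
def sh (n : ℕ) (d : ℕ → ℕ) : ℕ → ℕ := fun i => d (i + n)

/-- The digit `a` followed by the sequence `d`. -/
def consD (a : ℕ) (d : ℕ → ℕ) : ℕ → ℕ
  | 0 => a
  | i + 1 => d i

/-- The first `n` digits of `d`, followed by the sequence `e`. -/
def splice (d : ℕ → ℕ) (n : ℕ) (e : ℕ → ℕ) : ℕ → ℕ :=
  fun i => if i < n then d i else e (i - n)

/-- Intrinsic description of the unique expansions in base `q`: after a digit `0` the remaining
value is less than `1`, and after a digit `1` the reflected remaining value, which is
`1/(q-1)` minus the remaining value, is less than `1`. -/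
def Univoque (q : ℝ) (d : ℕ → ℕ) : Prop :=
  (∀ i, d i ≤ 1) ∧ ∀ n, (d n = 0 → val q (sh (n + 1) d) < 1) ∧
    (d n = 1 → 1 / (q - 1) - val q (sh (n + 1) d) < 1)

lemma hasSum_geom {q : ℝ} (hq : 1 < q) : HasSum (fun i : ℕ => 1 / q ^ (i + 1)) (1 / (q - 1)) := by
  have h := (hasSum_geometric_of_lt_one (r := q⁻¹) (by positivity)
    (inv_lt_one_of_one_lt₀ hq)).mul_left q⁻¹
  have e : q⁻¹ * (1 - q⁻¹)⁻¹ = 1 / (q - 1) := by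
    have : q - 1 ≠ 0 := by linarith
    have : q ≠ 0 := by linarith
    field_simp
  rw [e] at h
  have hf : (fun i : ℕ => 1 / q ^ (i + 1)) = fun i => q⁻¹ * q⁻¹ ^ i := by
    funext i; rw [← pow_succ', inv_pow, one_div]
  rw [hf]; exact h

lemma digit_le {d : ℕ → ℕ} (hd : ∀ i, d i ≤ 1) (i : ℕ) : (d i : ℝ) ≤ 1 := by
  exact_mod_cast hd i

lemma summable_val {q : ℝ} (hq : 1 < q) {d : ℕ → ℕ} (hd : ∀ i, d i ≤ 1) :
    Summable (fun i : ℕ => (d i : ℝ) / q ^ (i + 1)) := by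
  refine Summable.of_nonneg_of_le (fun i => by positivity) (fun i => ?_) (hasSum_geom hq).summable
  have := digit_le hd i
  gcongr

lemma val_nonneg {q : ℝ} (hq : 1 < q) (d : ℕ → ℕ) : 0 ≤ val q d :=
  tsum_nonneg fun i => by positivity

lemma val_le {q : ℝ} (hq : 1 < q) {d : ℕ → ℕ} (hd : ∀ i, d i ≤ 1) : val q d ≤ 1 / (q - 1) := by
  rw [← (hasSum_geom hq).tsum_eq]
  refine (summable_val hq hd).tsum_le_tsum (fun i => ?_) (hasSum_geom hq).summable
  have := digit_le hd i
  gcongr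

lemma sh_le {d : ℕ → ℕ} (hd : ∀ i, d i ≤ 1) (n : ℕ) : ∀ i, sh n d i ≤ 1 := fun _ => hd _

lemma sh_sh (m n : ℕ) (d : ℕ → ℕ) : sh m (sh n d) = sh (m + n) d := by
  funext i; simp [sh, add_assoc]

lemma sh_zero (d : ℕ → ℕ) : sh 0 d = d := rfl

lemma val_step {q : ℝ} (hq : 1 < q) {d : ℕ → ℕ} (hd : ∀ i, d i ≤ 1) :
    val q d = (d 0 + val q (sh 1 d)) / q := by
  have hq0 : q ≠ 0 := by linarith
  unfold val
  rw [(summable_val hq hd).tsum_eq_zero_add, add_div, ← tsum_div_const]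
  simp only [zero_add, pow_one, sh]
  congr 1
  refine tsum_congr fun i => ?_
  rw [div_div, ← pow_succ]

/-- Changing `d` from position `n` on moves its value by `q^{-n}` times the change of the tail. -/
lemma val_splice {q : ℝ} (hq : 1 < q) {e : ℕ → ℕ} (he : ∀ i, e i ≤ 1) (n : ℕ) :
    ∀ d : ℕ → ℕ, (∀ i, d i ≤ 1) →
      val q (splice d n e) = val q d + (val q e - val q (sh n d)) / q ^ n := by
  have hq0 : q ≠ 0 := by linarith
  induction n with
  | zero =>
    intro d hd
    have : splice d 0 e = e := by funext i; simp [splice]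
    rw [this, sh_zero]; simp
  | succ n ih =>
    intro d hd
    have h1 : sh 1 (splice d (n + 1) e) = splice (sh 1 d) n e := by
      funext i; simp [sh, splice]
    have hs : ∀ i, splice d (n + 1) e i ≤ 1 := by
      intro i; unfold splice; split_ifs
      exacts [hd i, he _]
    have h0 : splice d (n + 1) e 0 = d 0 := by simp [splice]
    rw [val_step hq hs, h1, h0, ih _ (sh_le hd 1), val_step hq hd, sh_sh]
    field_simp
    ring

lemma splice_le {d e : ℕ → ℕ} (hd : ∀ i, d i ≤ 1) (he : ∀ i, e i ≤ 1) (n : ℕ) :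
    ∀ i, splice d n e i ≤ 1 := by
  intro i; unfold splice; split_ifs
  exacts [hd i, he _]

lemma sh_splice_le {d e : ℕ → ℕ} {m n : ℕ} (h : m ≤ n) :
    sh m (splice d n e) = splice (sh m d) (n - m) e := by
  funext i
  unfold sh splice
  by_cases hi : i + m < n
  · rw [if_pos hi, if_pos (by omega)]
  · rw [if_neg hi, if_neg (by omega)]; congr 1; omega

lemma sh_splice_ge {d e : ℕ → ℕ} {m n : ℕ} (h : n ≤ m) :
    sh m (splice d n e) = sh (m - n) e := by
  funext i
  unfold sh splice
  rw [if_neg (by omega)]; congr 1; omega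

/-- The value scales at least linearly in `1/q`. -/
lemma val_scale {q p : ℝ} (hq : 1 < q) (hqp : q ≤ p) {d : ℕ → ℕ} (hd : ∀ i, d i ≤ 1) :
    val p d ≤ q / p * val q d := by
  have hp : 1 < p := by linarith
  unfold val
  rw [← tsum_mul_left]
  refine (summable_val hp hd).tsum_le_tsum (fun i => ?_) ((summable_val hq hd).mul_left _)
  have h1 : q / p * ((d i : ℝ) / q ^ (i + 1)) = (d i : ℝ) / (p * q ^ i) := by
    rw [pow_succ]; field_simp
  rw [h1, pow_succ']
  gcongr

lemma val_anti {q p : ℝ} (hq : 1 < q) (hqp : q ≤ p) {d : ℕ → ℕ} (hd : ∀ i, d i ≤ 1) :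
    val p d ≤ val q d := by
  refine (val_scale hq hqp hd).trans (mul_le_of_le_one_left (val_nonneg hq d) ?_)
  rw [div_le_one (by linarith)]; exact hqp

lemma val_lt {q p : ℝ} (hq : 1 < q) (hqp : q < p) {d : ℕ → ℕ} (hd : ∀ i, d i ≤ 1)
    (h0 : 0 < val q d) : val p d < val q d := by
  refine (val_scale hq hqp.le hd).trans_lt (mul_lt_of_lt_one_left h0 ?_)
  rw [div_lt_one (by linarith)]; exact hqp

/-- Among all sequences, `1^∞` loses the most value when the base increases; equivalently, the
value of the reflection is nonincreasing in the base. -/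
lemma val_sub_le {q p : ℝ} (hq : 1 < q) (hqp : q ≤ p) {d : ℕ → ℕ} (hd : ∀ i, d i ≤ 1) :
    val q d - val p d ≤ 1 / (q - 1) - 1 / (p - 1) := by
  have hp : 1 < p := by linarith
  have h1 := (summable_val hq hd).hasSum.sub (summable_val hp hd).hasSum
  have h2 := (hasSum_geom hq).sub (hasSum_geom hp)
  refine hasSum_le (fun i => ?_) h1 h2
  have := digit_le hd i
  have h3 : 1 / p ^ (i + 1) ≤ 1 / q ^ (i + 1) := by gcongr
  have h4 : (d i : ℝ) / q ^ (i + 1) - (d i : ℝ) / p ^ (i + 1)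
      = d i * (1 / q ^ (i + 1) - 1 / p ^ (i + 1)) := by ring
  rw [h4]
  exact mul_le_of_le_one_left (by linarith) this

lemma univoque_mono {q p : ℝ} (hq : 1 < q) (hqp : q ≤ p) {d : ℕ → ℕ} (h : Univoque q d) :
    Univoque p d := by
  refine ⟨h.1, fun n => ⟨fun hn => ?_, fun hn => ?_⟩⟩
  · exact (val_anti hq hqp (sh_le h.1 _)).trans_lt ((h.2 n).1 hn)
  · have := val_sub_le hq hqp (sh_le h.1 (n + 1))
    have := (h.2 n).2 hn
    linarith

lemma val_continuousOn {a : ℝ} (ha : 1 < a) {d : ℕ → ℕ} (hd : ∀ i, d i ≤ 1) :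
    ContinuousOn (fun q => val q d) (Set.Ici a) := by
  refine continuousOn_tsum (u := fun i : ℕ => 1 / a ^ (i + 1)) (fun i => ?_)
    (hasSum_geom ha).summable (fun i q hq => ?_)
  · refine continuousOn_const.div (continuousOn_id.pow _) fun q hq => ?_
    have : 0 < q := by have := mem_Ici.1 hq; linarith
    positivity
  · have hq' : a ≤ q := hq
    have h0 : 0 < q := by linarith
    rw [Real.norm_of_nonneg (by positivity)]
    have := digit_le hd i
    gcongr

/-- Every value between `val b d` and `val a d` is represented by `d` in some base of `[a,b]`. -/
lemma exists_base {a b y : ℝ} (ha : 1 < a) (hab : a ≤ b) {d : ℕ → ℕ} (hd : ∀ i, d i ≤ 1)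
    (h1 : val b d ≤ y) (h2 : y ≤ val a d) : ∃ p, a ≤ p ∧ p ≤ b ∧ val p d = y := by
  obtain ⟨p, hp, h⟩ := intermediate_value_Icc' hab
    ((val_continuousOn ha hd).mono Icc_subset_Ici_self) ⟨h1, h2⟩
  exact ⟨p, hp.1, hp.2, h⟩

/-! ### Existence of expansions and the characterization of uniqueness -/

/-- Remainders of the greedy algorithm in base `q` started at `t`. -/
def rem (q t : ℝ) : ℕ → ℝ
  | 0 => t
  | n + 1 => if 1 ≤ q * rem q t n then q * rem q t n - 1 else q * rem q t n

/-- Digits of the greedy algorithm in base `q` started at `t`. -/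
def greedy (q t : ℝ) (n : ℕ) : ℕ := if 1 ≤ q * rem q t n then 1 else 0

lemma exists_expansion {q t : ℝ} (hq : 1 < q) (hq2 : q ≤ 2) (h0 : 0 ≤ t) (h1 : t ≤ 1 / (q - 1)) :
    ∃ d : ℕ → ℕ, (∀ i, d i ≤ 1) ∧ val q d = t := by
  have hq1 : 0 < q - 1 := by linarith
  have hb : ∀ n, 0 ≤ rem q t n ∧ rem q t n ≤ 1 / (q - 1) := by
    intro n
    induction n with
    | zero => exact ⟨h0, h1⟩
    | succ n ih =>
      obtain ⟨i1, i2⟩ := ih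
      rw [le_div_iff₀ hq1] at i2
      rw [rem, le_div_iff₀ hq1]
      split_ifs with h
      · exact ⟨by linarith, by nlinarith⟩
      · exact ⟨by positivity, by nlinarith⟩
  have hstep : ∀ n, rem q t (n + 1) = q * rem q t n - greedy q t n := by
    intro n
    rw [rem, greedy]; split_ifs <;> simp
  have hsum : ∀ n, ∑ i ∈ Finset.range n, (greedy q t i : ℝ) / q ^ (i + 1)
      = t - rem q t n / q ^ n := by
    intro n
    induction n with
    | zero => simp [rem]
    | succ n ih =>
      rw [Finset.sum_range_succ, ih, hstep]
      have : q ≠ 0 := by linarith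
      field_simp
      ring
  have hg : ∀ i, greedy q t i ≤ 1 := by intro i; unfold greedy; split_ifs <;> simp
  refine ⟨greedy q t, hg, ?_⟩
  have hl := (summable_val hq hg).hasSum.tendsto_sum_nat
  simp only [hsum] at hl
  have hz : Tendsto (fun n => rem q t n / q ^ n) atTop (𝓝 0) := by
    have hz' : Tendsto (fun n : ℕ => (1 / (q - 1)) / q ^ n) atTop (𝓝 0) :=
      tendsto_const_nhds.div_atTop (tendsto_pow_atTop_atTop_of_one_lt hq)
    refine squeeze_zero (fun n => ?_) (fun n => ?_) hz'
    · have := (hb n).1; positivity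
    · have := (hb n).2; gcongr
  have := tendsto_nhds_unique hl (by simpa using tendsto_const_nhds.sub hz)
  exact this

lemma val_eq_of_agree {q : ℝ} (hq : 1 < q) {d e : ℕ → ℕ} (hd : ∀ i, d i ≤ 1) (he : ∀ i, e i ≤ 1)
    (hv : val q d = val q e) {n : ℕ} (h : ∀ i < n, d i = e i) :
    val q (sh n d) = val q (sh n e) := by
  have h1 : e = splice d n (sh n e) := by
    funext i
    unfold splice sh
    split_ifs with hi
    · exact (h i hi).symm
    · congr 1; omega
  have h2 := val_splice hq (sh_le he n) n d hd
  rw [← h1, hv] at h2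
  have h3 : (val q (sh n e) - val q (sh n d)) / q ^ n = 0 := by linarith
  rw [div_eq_zero_iff] at h3
  rcases h3 with h3 | h3
  · linarith
  · exact absurd h3 (by positivity)

lemma univoque_unique {q : ℝ} (hq : 1 < q) {d e : ℕ → ℕ} (hd : Univoque q d)
    (he : ∀ i, e i ≤ 1) (hv : val q d = val q e) : e = d := by
  by_contra hne
  have hex : ∃ n, d n ≠ e n := by
    by_contra! h
    exact hne (funext fun n => (h n).symm)
  classical
  obtain ⟨n, hn, hmin⟩ : ∃ n, d n ≠ e n ∧ ∀ i < n, d i = e i :=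
    ⟨Nat.find hex, Nat.find_spec hex, fun i hi => not_not.1 (Nat.find_min hex hi)⟩
  have ht := val_eq_of_agree hq hd.1 he hv hmin
  rw [val_step hq (sh_le hd.1 n), val_step hq (sh_le he n), sh_sh, sh_sh,
    div_left_inj' (by linarith)] at ht
  simp only [sh, zero_add] at ht
  have hd1 := hd.1 n
  have he1 := he n
  have e1 := val_nonneg hq (sh (1 + n) e)
  have e2 := val_le hq (sh_le he (1 + n))
  have hc := hd.2 n
  rw [add_comm n 1] at hc
  rcases Nat.le_one_iff_eq_zero_or_eq_one.1 hd1 with a | a <;>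
    rcases Nat.le_one_iff_eq_zero_or_eq_one.1 he1 with b | b
  · exact hn (a.trans b.symm)
  · have := hc.1 a
    rw [a, b] at ht; push_cast at ht; linarith
  · have := hc.2 a
    rw [a, b] at ht; push_cast at ht; linarith
  · exact hn (a.trans b.symm)

/-- If `d` violates the univoque condition at `n`, its tail at `n` can be re-expanded with the
other digit. -/
lemma univoque_of_unique {q : ℝ} (hq : 1 < q) (hq2 : q ≤ 2) {d : ℕ → ℕ} (hd : ∀ i, d i ≤ 1)
    (hu : ∀ e : ℕ → ℕ, (∀ i, e i ≤ 1) → val q e = val q d → e = d) : Univoque q d := by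
  have hq1 : 0 < q - 1 := by linarith
  have key : ∀ n, ∀ t, 0 ≤ t → t ≤ 1 / (q - 1) → ∀ a : ℕ, a ≤ 1 →
      d n + val q (sh (n + 1) d) = a + t → d n = a := by
    intro n t h0 h1 a ha h
    obtain ⟨e, he, rfl⟩ := exists_expansion hq hq2 h0 h1
    have hc : ∀ i, consD a e i ≤ 1 := by
      intro i; cases i
      exacts [ha, he _]
    have hs : sh 1 (consD a e) = e := rfl
    have := hu (splice d n (consD a e)) (splice_le hd hc n) (by
      rw [val_splice hq hc n d hd, val_step hq hc, val_step hq (sh_le hd n), sh_sh, hs,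
        add_comm 1 n]
      have : sh n d 0 = d n := by simp [sh]
      rw [this, h]
      simp [consD])
    have := congrFun this n
    rw [← this]; simp [splice, consD]
  refine ⟨hd, fun n => ⟨fun hn => ?_, fun hn => ?_⟩⟩
  · by_contra! h
    have := key n (val q (sh (n + 1) d) - 1) (by linarith)
      (by linarith [val_le hq (sh_le hd (n + 1))]) 1 le_rfl (by rw [hn]; push_cast; ring)
    omega
  · by_contra! h
    have := key n (val q (sh (n + 1) d) + 1) (by linarith [val_nonneg hq (sh (n + 1) d)])
      (by linarith) 0 (by norm_num) (by rw [hn]; push_cast; ring)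
    omega

lemma mem_univSet {q x : ℝ} :
    q ∈ UnivSet x ↔ 1 < q ∧ q ≤ 2 ∧ ∃ d, Univoque q d ∧ val q d = x := by
  constructor
  · rintro ⟨⟨h1, h2⟩, d, ⟨hd, hx⟩, hu⟩
    refine ⟨h1, h2, d, univoque_of_unique h1 h2 hd fun e he hv => ?_, hx.symm⟩
    exact hu e ⟨he, hx.trans hv.symm⟩
  · rintro ⟨h1, h2, d, hd, hx⟩
    refine ⟨⟨h1, h2⟩, d, ⟨hd.1, hx.symm⟩, fun e he => ?_⟩
    exact univoque_unique h1 hd he.1 (hx.trans he.2)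

/-! ### Monotonicity of `x ↦ x q_s(x)` and right upper semicontinuity -/

lemma univSet_bdd (x : ℝ) : BddBelow (UnivSet x) := ⟨1, fun _ h => h.1.1.le⟩

lemma qs_le {q x : ℝ} (h : q ∈ UnivSet x) : qs x ≤ q := csInf_le (univSet_bdd x) h

lemma qs_le_two (x : ℝ) : qs x ≤ 2 := by
  by_cases h : (UnivSet x).Nonempty
  · obtain ⟨q, hq⟩ := h
    exact (qs_le hq).trans hq.1.2
  · rw [qs, not_nonempty_iff_eq_empty.1 h, Real.sInf_empty]; norm_num

lemma base_lower {x q y : ℝ} (hx : 0 < x) (hxy : x ≤ y) (hq : q ∈ UnivSet y)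
    (h2 : q * y / x ≤ 2) : qs x ≤ q * y / x := by
  obtain ⟨h1, -, d, hd, rfl⟩ := mem_univSet.1 hq
  have hle : q ≤ q * val q d / x := by
    rw [le_div_iff₀ hx]; gcongr
  have hval : val (q * val q d / x) d ≤ x := by
    refine (val_scale h1 hle hd.1).trans (le_of_eq ?_)
    have : val q d ≠ 0 := by linarith
    field_simp
  obtain ⟨p, hp1, hp2, hp⟩ := exists_base h1 hle hd.1 hval hxy
  exact (qs_le (mem_univSet.2 ⟨by linarith, by linarith, d, univoque_mono h1 hp1 hd, hp⟩)).trans hp2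

/-- The function `x ↦ x q_s(x)` is nondecreasing: a unique expansion of `y` in base `q` is a
unique expansion of `x ≤ y` in some base at most `q y / x`. -/
lemma mul_qs_mono {x y : ℝ} (hx : 0 < x) (hxy : x ≤ y) (hne : (UnivSet y).Nonempty) :
    x * qs x ≤ y * qs y := by
  have hy : 0 < y := by linarith
  have h : x * qs x / y ≤ qs y := by
    refine le_csInf hne fun q hq => ?_
    rw [div_le_iff₀ hy]
    by_cases h2 : q * y / x ≤ 2
    · have := base_lower hx hxy hq h2
      rw [le_div_iff₀ hx] at this
      linarith
    · push Not at h2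
      rw [lt_div_iff₀ hx] at h2
      nlinarith [qs_le_two x]
  rw [div_le_iff₀ hy] at h
  linarith

lemma val_diff_agree {q : ℝ} (hq : 1 < q) {d e : ℕ → ℕ} (hd : ∀ i, d i ≤ 1) (he : ∀ i, e i ≤ 1)
    (n : ℕ) : val q (splice d n e) ≤ val q d + 1 / (q - 1) / q ^ n := by
  rw [val_splice hq he n d hd]
  have h1 := val_le hq he
  have h2 := val_nonneg hq (sh n d)
  have : val q e - val q (sh n d) ≤ 1 / (q - 1) := by linarith
  gcongr

/-- Replacing a tail of a univoque sequence by a univoque sequence of larger value preserves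
univoqueness if the conditions at the earlier digits `0` survive; those at the digits `1` survive
automatically. -/
lemma univoque_splice {q : ℝ} (hq : 1 < q) {d e : ℕ → ℕ} (hd : Univoque q d) (he : Univoque q e)
    (n : ℕ) (hgt : val q (sh n d) < val q e)
    (h0 : ∀ i < n, d i = 0 → val q (sh (i + 1) d) + (val q e - val q (sh n d)) < 1) :
    Univoque q (splice d n e) := by
  refine ⟨splice_le hd.1 he.1 n, fun i => ?_⟩
  by_cases hi : i < n
  · have hi' : splice d n e i = d i := by simp [splice, hi]
    have hn : sh (n - (i + 1)) (sh (i + 1) d) = sh n d := by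
      rw [sh_sh]; congr 1; omega
    rw [hi', sh_splice_le (by omega), val_splice hq he.1 _ _ (sh_le hd.1 _), hn]
    have hpow : 1 ≤ q ^ (n - (i + 1)) := one_le_pow₀ hq.le
    have hp : (val q e - val q (sh n d)) / q ^ (n - (i + 1)) ≤ val q e - val q (sh n d) :=
      div_le_self (by linarith) hpow
    have hp0 : 0 ≤ (val q e - val q (sh n d)) / q ^ (n - (i + 1)) :=
      div_nonneg (by linarith) (by linarith)
    refine ⟨fun h => ?_, fun h => ?_⟩
    · have := h0 i hi h
      linarith
    · have := (hd.2 i).2 h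
      linarith
  · have hi' : splice d n e i = e (i - n) := by simp [splice, hi]
    rw [hi', sh_splice_ge (by omega)]
    have : i + 1 - n = i - n + 1 := by omega
    rw [this]
    exact he.2 (i - n)

lemma univoque_sh {q : ℝ} {d : ℕ → ℕ} (hd : Univoque q d) (n : ℕ) : Univoque q (sh n d) := by
  refine ⟨sh_le hd.1 n, fun i => ?_⟩
  rw [sh_sh, show i + 1 + n = (i + n) + 1 by ring]
  exact hd.2 (i + n)

/-- A family of numbers `v i < 1` whose supremum over `i ∈ A` is `1` takes, at some index
beyond `N`, a value larger than `c` and larger than all earlier ones. -/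
lemma exists_record {A : ℕ → Prop} {v : ℕ → ℝ} (h1 : ∀ i, A i → v i < 1)
    (hs : ∀ ε > 0, ∃ i, A i ∧ 1 - ε < v i) (N : ℕ) (c : ℝ) (hc : c < 1) :
    ∃ n, N < n ∧ A n ∧ c < v n ∧ ∀ i < n, A i → v i < v n := by
  classical
  have hfin : ∀ N : ℕ, ∃ ε > 0, c ≤ 1 - ε ∧ ∀ i ≤ N, A i → v i ≤ 1 - ε := by
    intro N
    induction N with
    | zero =>
      by_cases hA : A 0
      · refine ⟨min (1 - c) (1 - v 0), lt_min (by linarith) (by linarith [h1 0 hA]), ?_, ?_⟩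
        · linarith [min_le_left (1 - c) (1 - v 0)]
        · intro i hi _
          obtain rfl : i = 0 := by omega
          linarith [min_le_right (1 - c) (1 - v 0)]
      · refine ⟨1 - c, by linarith, by linarith, fun i hi hAi => ?_⟩
        obtain rfl : i = 0 := by omega
        exact absurd hAi hA
    | succ N ih =>
      obtain ⟨ε, he, hce, h⟩ := ih
      by_cases hA : A (N + 1)
      · refine ⟨min ε (1 - v (N + 1)), lt_min he (by linarith [h1 _ hA]), ?_, ?_⟩
        · linarith [min_le_left ε (1 - v (N + 1))]
        · intro i hi hAi
          rcases Nat.lt_or_ge N i with hi' | hi'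
          · obtain rfl : i = N + 1 := by omega
            linarith [min_le_right ε (1 - v (N + 1))]
          · linarith [min_le_left ε (1 - v (N + 1)), h i hi' hAi]
      · refine ⟨ε, he, hce, fun i hi hAi => ?_⟩
        rcases Nat.lt_or_ge N i with hi' | hi'
        · obtain rfl : i = N + 1 := by omega
          exact absurd hAi hA
        · exact h i hi' hAi
  obtain ⟨ε, he, hce, h⟩ := hfin N
  have hex := hs ε he
  obtain ⟨hA, hv⟩ := Nat.find_spec hex
  refine ⟨Nat.find hex, ?_, hA, by linarith, fun i hi hAi => ?_⟩
  · by_contra! hle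
    linarith [h _ hle hA]
  · by_contra! hle
    exact Nat.find_min hex hi ⟨hAi, by linarith⟩

/-- If `d` is univoque in base `q` but in no smaller base, then univoque sequences in base `q`
of larger value agree with `d` to arbitrarily many digits. -/
lemma approx_above {q : ℝ} (hq : 1 < q) {d : ℕ → ℕ} (hd : Univoque q d)
    (hno : ∀ p, 1 < p → p < q → ¬ Univoque p d) (N : ℕ) :
    ∃ n e, N ≤ n ∧ Univoque q (splice d n e) ∧ (∀ i, e i ≤ 1) ∧
      val q d < val q (splice d n e) := by
  -- the orbit of the value comes arbitrarily close to the switch region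
  have hclose : ∀ ε > 0, ∃ n, (d n = 0 ∧ 1 - ε < val q (sh (n + 1) d)) ∨
      (d n = 1 ∧ 1 - ε < 1 / (q - 1) - val q (sh (n + 1) d)) := by
    intro ε he
    have hcont : ContinuousAt (fun p : ℝ => 1 / (p - 1)) q :=
      continuousAt_const.div (by fun_prop) (by linarith)
    have hev : ∀ᶠ p in 𝓝[<] q, 1 / (p - 1) < 1 / (q - 1) + ε :=
      (hcont.mono_left nhdsWithin_le_nhds).eventually_lt_const (by simpa using he)
    have hev2 : ∀ᶠ p in 𝓝[<] q, p ∈ Set.Ioo 1 q := Ioo_mem_nhdsLT hq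
    obtain ⟨p, hp, hp1, hpq⟩ := (hev.and hev2).exists
    have hnp := hno p hp1 hpq
    obtain ⟨n, hn⟩ := not_forall.1 fun h => hnp ⟨hd.1, h⟩
    refine ⟨n, ?_⟩
    have ht := val_sub_le hp1 hpq.le (sh_le hd.1 (n + 1))
    have hm := val_anti hp1 hpq.le (sh_le hd.1 (n + 1))
    by_cases h0 : d n = 0 ∧ 1 - ε < val q (sh (n + 1) d)
    · exact Or.inl h0
    · right
      rcases Nat.le_one_iff_eq_zero_or_eq_one.1 (hd.1 n) with a | a
      · exfalso
        simp only [a, true_and, not_lt] at h0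
        exact hn ⟨fun _ => by linarith, fun h => by omega⟩
      · refine ⟨a, ?_⟩
        by_contra! h
        exact hn ⟨fun h => by omega, fun _ => by linarith⟩
  -- it suffices to find two positions whose tails can be exchanged
  suffices hsuff : ∃ n m, N ≤ n ∧ val q (sh (n + 1) d) < val q (sh (m + 1) d) ∧
      ∀ i < n + 1, d i = 0 →
        val q (sh (i + 1) d) + (val q (sh (m + 1) d) - val q (sh (n + 1) d)) < 1 by
    obtain ⟨n, m, hN, hlt, h⟩ := hsuff
    refine ⟨n + 1, sh (m + 1) d, by omega,
      univoque_splice hq hd (univoque_sh hd _) (n + 1) hlt h, sh_le hd.1 _, ?_⟩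
    rw [val_splice hq (sh_le hd.1 _) _ _ hd.1]
    have : 0 < (val q (sh (m + 1) d) - val q (sh (n + 1) d)) / q ^ (n + 1) :=
      div_pos (by linarith) (by positivity)
    linarith
  by_cases hA : ∀ ε > 0, ∃ i, d i = 0 ∧ 1 - ε < val q (sh (i + 1) d)
  · -- the values after a digit `0` approach `1`: exchange two record values
    obtain ⟨n, hn, hn0, -, hrec⟩ := exists_record (A := fun i => d i = 0)
      (v := fun i => val q (sh (i + 1) d)) (fun i => (hd.2 i).1) hA N 0 (by norm_num)
    obtain ⟨m, -, hm0, hm, -⟩ := exists_record (A := fun i => d i = 0)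
      (v := fun i => val q (sh (i + 1) d)) (fun i => (hd.2 i).1) hA N _ ((hd.2 n).1 hn0)
    refine ⟨n, m, hn.le, hm, fun i hi hi0 => ?_⟩
    have h1 := (hd.2 m).1 hm0
    rcases Nat.lt_succ_iff_lt_or_eq.1 hi with h | rfl
    · linarith [hrec i h hi0]
    · linarith
  · -- the values after a digit `0` stay below `1 - δ`, so the others approach their bound
    push Not at hA
    obtain ⟨δ, hδ, hA⟩ := hA
    have hB : ∀ ε > 0, ∃ i, d i = 1 ∧ 1 - ε < 1 / (q - 1) - val q (sh (i + 1) d) := by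
      intro ε he
      obtain ⟨n, h | h⟩ := hclose (min ε δ) (lt_min he hδ)
      · linarith [hA n h.1, min_le_right ε δ]
      · exact ⟨n, h.1, by linarith [min_le_left ε δ]⟩
    obtain ⟨m, hm1, hm⟩ := hB δ hδ
    obtain ⟨n, hN, hn1, hn, -⟩ := exists_record (A := fun i => d i = 1)
      (v := fun i => 1 / (q - 1) - val q (sh (i + 1) d)) (fun i => (hd.2 i).2) hB N _
      ((hd.2 m).2 hm1)
    refine ⟨n, m, hN.le, by linarith, fun i _ hi0 => ?_⟩
    linarith [hA i hi0, (hd.2 n).2 hn1]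

lemma qs_right_usc_of_interval {p c x y : ℝ} (hp : 1 < p) (hpc : p < c) (hc : c ≤ 2)
    {d : ℕ → ℕ} (hd : Univoque p d) (hcx : val c d < x) (hxy : x < y) (hy : y < val p d) :
    qs y < c := by
  obtain ⟨r, hr1, hr2, hr⟩ := exists_base hp hpc.le hd.1 (hcx.le.trans hxy.le) hy.le
  have hrc : r ≠ c := by rintro rfl; linarith
  exact (qs_le (mem_univSet.2 ⟨by linarith, by linarith, d, univoque_mono hp hr1 hd, hr⟩)).trans_lt
    (lt_of_le_of_ne hr2 hrc)

/-- Upper semicontinuity of `q_s` from the right. -/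
lemma qs_right_usc {x c : ℝ} (hx : 0 < x) (hne : (UnivSet x).Nonempty) (hc : qs x < c) :
    ∃ δ > 0, ∀ y, x < y → y < x + δ → qs y < c := by
  by_cases hc2 : 2 < c
  · exact ⟨1, one_pos, fun y _ _ => (qs_le_two y).trans_lt hc2⟩
  push Not at hc2
  obtain ⟨q, hqU, hqc⟩ := exists_lt_of_csInf_lt hne hc
  obtain ⟨hq, -, d, hd, rfl⟩ := mem_univSet.1 hqU
  have hc1 : 1 < c := by linarith
  by_cases hno : ∀ p, 1 < p → p < q → ¬ Univoque p d
  · have hlt := val_lt hq hqc hd.1 hx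
    have hlim : Tendsto (fun n : ℕ => val c d + 1 / (c - 1) / c ^ n) atTop (𝓝 (val c d + 0)) :=
      tendsto_const_nhds.add
        (tendsto_const_nhds.div_atTop (tendsto_pow_atTop_atTop_of_one_lt hc1))
    obtain ⟨N, hN⟩ := eventually_atTop.1 (hlim.eventually_lt_const (u := val q d) (by simpa))
    obtain ⟨n, e, hn, hU, he, hgt⟩ := approx_above hq hd hno N
    refine ⟨val q (splice d n e) - val q d, by linarith, fun y hy1 hy2 => ?_⟩
    exact qs_right_usc_of_interval hq hqc hc2 hU
      ((val_diff_agree hc1 hd.1 he n).trans_lt (hN n hn)) hy1 (by linarith)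
  · push Not at hno
    obtain ⟨p, hp1, hpq, hpd⟩ := hno
    have h0 : 0 < val p d := hx.trans_le (val_anti hp1 hpq.le hd.1)
    have hlt := val_lt hp1 hpq hd.1 h0
    refine ⟨val p d - val q d, by linarith, fun y hy1 hy2 => ?_⟩
    exact qs_right_usc_of_interval hp1 (hpq.trans hqc) hc2 hpd (val_lt hq hqc hd.1 hx) hy1
      (by linarith)

/-! ### The sequences `0^k(10)^∞`, nonemptiness of `𝒰(x)`, and small `x` -/

/-- The sequence `(10)^∞`. -/
def alt (i : ℕ) : ℕ := (i + 1) % 2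

/-- The sequence `0^k (10)^∞`. -/
def zalt : ℕ → ℕ → ℕ
  | 0 => alt
  | k + 1 => consD 0 (zalt k)

lemma alt_le (i : ℕ) : alt i ≤ 1 := by unfold alt; omega

lemma consD_le {a : ℕ} {d : ℕ → ℕ} (ha : a ≤ 1) (hd : ∀ i, d i ≤ 1) : ∀ i, consD a d i ≤ 1
  | 0 => ha
  | i + 1 => hd i

lemma zalt_le : ∀ k i, zalt k i ≤ 1
  | 0 => alt_le
  | k + 1 => consD_le (by norm_num) (zalt_le k)

lemma val_consD {q : ℝ} (hq : 1 < q) {a : ℕ} {d : ℕ → ℕ} (ha : a ≤ 1) (hd : ∀ i, d i ≤ 1) :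
    val q (consD a d) = (a + val q d) / q :=
  val_step hq (consD_le ha hd)

lemma univoque_consD {q : ℝ} {a : ℕ} {d : ℕ → ℕ} (ha : a ≤ 1) (hd : Univoque q d)
    (h0 : a = 0 → val q d < 1) (h1 : a = 1 → 1 / (q - 1) - val q d < 1) :
    Univoque q (consD a d) := by
  refine ⟨consD_le ha hd.1, fun n => ?_⟩
  cases n with
  | zero => exact ⟨h0, h1⟩
  | succ n => exact hd.2 n

lemma val_alt {q : ℝ} (hq : 1 < q) : val q alt = q / (q ^ 2 - 1) := by
  have h1 : sh 1 alt = consD 0 alt := by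
    funext i; cases i <;> simp [sh, alt, consD]; omega
  have h := val_step hq alt_le
  rw [h1, val_consD hq (by norm_num) alt_le] at h
  have hq0 : q ≠ 0 := by linarith
  have hq1 : q ^ 2 - 1 ≠ 0 := by nlinarith
  simp only [alt, zero_add, Nat.mod_succ, Nat.cast_one, Nat.cast_zero] at h
  change val q alt = _ at h
  field_simp at h ⊢
  linarith

lemma val_zalt {q : ℝ} (hq : 1 < q) : ∀ k, val q (zalt k) = q / (q ^ 2 - 1) / q ^ k
  | 0 => by simpa [zalt] using val_alt hq
  | k + 1 => by
    rw [zalt, val_consD hq (by norm_num) (zalt_le k), val_zalt hq k, Nat.cast_zero, zero_add,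
      pow_succ q k, ← div_div]

lemma univoque_alt {q : ℝ} (hq : 1 < q) (h : q / (q ^ 2 - 1) < 1) : Univoque q alt := by
  have h1 : ∀ n, alt n = 0 → sh (n + 1) alt = alt := by
    intro n hn; funext i; simp only [sh, alt] at hn ⊢; omega
  have h2 : ∀ n, alt n = 1 → sh (n + 1) alt = consD 0 alt := by
    intro n hn; funext i; simp only [alt] at hn
    cases i <;> simp only [sh, alt, consD] <;> omega
  refine ⟨alt_le, fun n => ⟨fun hn => ?_, fun hn => ?_⟩⟩
  · rw [h1 n hn, val_alt hq]; exact h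
  · rw [h2 n hn, val_consD hq (by norm_num) alt_le, val_alt hq]
    have e : 1 / (q - 1) - ((0 : ℕ) + q / (q ^ 2 - 1)) / q = q / (q ^ 2 - 1) := by
      have hq0 : q ≠ 0 := by linarith
      have hq1 : q - 1 ≠ 0 := by linarith
      have hq2 : q + 1 ≠ 0 := by linarith
      have hq3 : q ^ 2 - 1 = (q - 1) * (q + 1) := by ring
      rw [hq3]
      field_simp
      push_cast
      ring
    rw [e]; exact h

lemma univoque_zalt {q : ℝ} (hq : 1 < q) (h : q / (q ^ 2 - 1) < 1) : ∀ k, Univoque q (zalt k)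
  | 0 => univoque_alt hq h
  | k + 1 => by
    refine univoque_consD (by norm_num) (univoque_zalt hq h k) (fun _ => ?_) (by norm_num)
    rw [val_zalt hq]
    refine (div_le_self ?_ (one_le_pow₀ hq.le)).trans_lt h
    have : 0 < q ^ 2 - 1 := by nlinarith
    positivity

lemma qG_sq : qG ^ 2 = qG + 1 := by
  have := Real.sq_sqrt (show (0 : ℝ) ≤ 5 by norm_num)
  unfold qG; nlinarith

lemma qG_gt : 1.618 < qG := by
  have : (2.236 : ℝ) < Real.sqrt 5 := Real.lt_sqrt_of_sq_lt (by norm_num)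
  unfold qG; linarith

lemma qG_lt : qG < 1.6181 := by
  have : Real.sqrt 5 < 2.2362 := by
    rw [Real.sqrt_lt' (by norm_num)]; norm_num
  unfold qG; linarith

lemma qG_alt : qG / (qG ^ 2 - 1) = 1 := by
  have := qG_gt
  rw [qG_sq, add_sub_cancel_right, div_self (by linarith)]

lemma alt_lt_one_iff {q : ℝ} (hq : 1 < q) : q / (q ^ 2 - 1) < 1 ↔ qG < q := by
  rw [div_lt_one (by nlinarith)]
  have := qG_sq
  have := qG_gt
  constructor <;> intro h <;> nlinarith

lemma mem_univSet_zalt {p x : ℝ} (hp : qG < p) (hp2 : p ≤ 2) (k : ℕ)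
    (h1 : p / (p ^ 2 - 1) / p ^ k ≤ x) (h2 : x * qG ^ k < 1) : ∃ q ∈ UnivSet x, q ≤ p := by
  have hG : 1 < qG := by linarith [qG_gt]
  have hx : x < val qG (zalt k) := by
    rw [val_zalt hG, qG_alt, lt_div_iff₀ (by positivity)]; exact h2
  rw [← val_zalt (hG.trans hp)] at h1
  obtain ⟨q, hq1, hq2, hq⟩ := exists_base hG hp.le (zalt_le k) h1 hx.le
  have hne : q ≠ qG := by rintro rfl; linarith
  have hqG : qG < q := lt_of_le_of_ne hq1 hne.symm
  exact ⟨q, mem_univSet.2 ⟨by linarith, by linarith, zalt k,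
    univoque_zalt (by linarith) ((alt_lt_one_iff (by linarith)).2 hqG) k, hq⟩, hq2⟩

lemma exists_pow_near {x : ℝ} (hx : 0 < x) (hx1 : x < 1) :
    ∃ k : ℕ, x * qG ^ k < 1 ∧ 1 ≤ x * qG ^ (k + 1) := by
  have hG : 1 < qG := by linarith [qG_gt]
  have hex : ∃ n : ℕ, 1 ≤ x * qG ^ n := by
    obtain ⟨n, hn⟩ := pow_unbounded_of_one_lt (1 / x) hG
    refine ⟨n, ?_⟩
    rw [div_lt_iff₀ hx] at hn; linarith
  classical
  have h0 : Nat.find hex ≠ 0 := by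
    intro h
    have := Nat.find_spec hex
    rw [h] at this; linarith
  obtain ⟨k, hk⟩ := Nat.exists_eq_succ_of_ne_zero h0
  refine ⟨k, ?_, ?_⟩
  · have := Nat.find_min hex (m := k) (by omega)
    linarith
  · have := Nat.find_spec hex
    rwa [hk] at this

/-- For `x ≥ 1` the sequence `1^∞` is the unique expansion in base `1 + 1/x`. -/
lemma mem_univSet_one {x : ℝ} (hx : 1 ≤ x) : 1 + 1 / x ∈ UnivSet x := by
  have hx0 : 0 < x := by linarith
  have h1 : 1 < 1 + 1 / x := by have : 0 < 1 / x := by positivity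
                                linarith
  have hv : val (1 + 1 / x) (fun _ => 1) = 1 / (1 + 1 / x - 1) := by
    rw [← (hasSum_geom h1).tsum_eq]; simp [val]
  refine mem_univSet.2 ⟨h1, ?_, fun _ => 1, ⟨fun _ => le_rfl, fun n => ⟨by simp, fun _ => ?_⟩⟩, ?_⟩
  · have : 1 / x ≤ 1 := by rw [div_le_one hx0]; exact hx
    linarith
  · change _ - val _ (fun _ => 1) < 1
    rw [hv]; norm_num
  · rw [hv]; simp

/-- The sequence `100(10)^∞` is univoque in base `1.81`; its values in the bases from `1.81` to `2`
cover the numbers not reached by the sequences `0^k(10)^∞`. -/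
lemma univSet_nonempty_mid {x : ℝ} (h1 : 0.6 ≤ x) (h2 : x ≤ 0.68) : (UnivSet x).Nonempty := by
  have hz : ∀ q : ℝ, 1 < q → val q (consD 1 (zalt 2)) = (1 + q / (q ^ 2 - 1) / q ^ 2) / q := by
    intro q hq
    rw [val_consD hq le_rfl (zalt_le 2), val_zalt hq]; norm_num
  have hU : Univoque 1.81 (consD 1 (zalt 2)) := by
    refine univoque_consD le_rfl (univoque_zalt (by norm_num) (by norm_num) 2) (by norm_num)
      fun _ => ?_
    rw [val_zalt (by norm_num)]; norm_num
  obtain ⟨q, hq1, hq2, hq⟩ := exists_base (a := 1.81) (b := 2) (y := x) (by norm_num)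
    (by norm_num) hU.1 (by rw [hz _ (by norm_num)]; norm_num; linarith)
    (by rw [hz _ (by norm_num)]; norm_num; linarith)
  exact ⟨q, mem_univSet.2 ⟨by linarith, hq2, _, univoque_mono (by norm_num) hq1 hU, hq⟩⟩

lemma univSet_nonempty {x : ℝ} (hx : 0 < x) : (UnivSet x).Nonempty := by
  have hG := qG_gt
  have hG' := qG_lt
  rcases le_or_gt 1 x with h1 | h1
  · exact ⟨_, mem_univSet_one h1⟩
  obtain ⟨k, hk1, hk2⟩ := exists_pow_near hx h1
  have key : (2 : ℝ) / (2 ^ 2 - 1) / 2 ^ k ≤ x → (UnivSet x).Nonempty := fun h => by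
    obtain ⟨q, hq, -⟩ := mem_univSet_zalt (by linarith) le_rfl k h hk1
    exact ⟨q, hq⟩
  cases k with
  | zero =>
    by_cases hx' : x ≤ 0.68
    · refine univSet_nonempty_mid ?_ hx'
      simp only [zero_add, pow_one] at hk2
      nlinarith
    · exact key (by norm_num; linarith)
  | succ k =>
    apply key
    rw [div_le_iff₀ (by positivity)]
    have hpow : qG ^ k ≤ 2 ^ k := by gcongr; linarith
    have e1 : qG ^ (k + 1 + 1) = qG ^ k * (qG + 1) := by rw [← qG_sq]; ring
    rw [e1] at hk2
    have h3 : x * qG ^ k * 2.6181 ≤ x * 2 ^ k * 2.6181 := by gcongr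
    have h4 : x * (qG ^ k * (qG + 1)) ≤ x * qG ^ k * 2.6181 := by
      rw [← mul_assoc]; gcongr; linarith
    rw [show (2 : ℝ) / (2 ^ 2 - 1) = 2 / 3 by norm_num, pow_succ]
    linarith

/-- `q_s(x)` tends to at most the golden ratio as `x → 0`. -/
lemma qs_lt_near_zero {c : ℝ} (hc : qG < c) : ∃ δ > 0, ∀ x, 0 < x → x < δ → qs x < c := by
  have hG := qG_gt
  have hG' := qG_lt
  obtain ⟨p, hp, hpc⟩ := exists_between (lt_min hc (show qG < 2 by linarith))
  have hp2 : p < 2 := hpc.trans_le (min_le_right _ _)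
  have hpc : p < c := hpc.trans_le (min_le_left _ _)
  have hr : 1 < p / qG := by rw [one_lt_div (by linarith)]; exact hp
  obtain ⟨K, hK⟩ := pow_unbounded_of_one_lt qG hr
  refine ⟨1 / qG ^ (K + 1), by positivity, fun x hx hxd => ?_⟩
  rw [lt_div_iff₀ (by positivity)] at hxd
  have hx1 : x < 1 := by
    have : 1 ≤ qG ^ (K + 1) := one_le_pow₀ (by linarith)
    nlinarith
  obtain ⟨k, hk1, hk2⟩ := exists_pow_near hx hx1
  have hKk : K < k + 1 := by
    by_contra! h
    have : qG ^ (k + 1) ≤ qG ^ (K + 1) := pow_le_pow_right₀ (by linarith) (by omega)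
    nlinarith
  have hpk : qG < (p / qG) ^ k := hK.trans_le (pow_le_pow_right₀ hr.le (by omega))
  rw [div_pow, lt_div_iff₀ (by positivity)] at hpk
  have ha : p / (p ^ 2 - 1) < 1 := (alt_lt_one_iff (by linarith)).2 hp
  obtain ⟨q, hq, hqp⟩ := mem_univSet_zalt hp hp2.le k (x := x) (by
    rw [div_le_iff₀ (by have : 0 < p := by linarith
                        positivity)]
    have : x * qG ^ (k + 1) ≤ x * p ^ k := by
      rw [pow_succ']; gcongr
    linarith) hk1
  exact (qs_le hq).trans_lt (by linarith)

/-- In a univoque sequence of a base at most `7/4`, a digit `0` followed by a digit `1` is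
followed by `0`: otherwise `11` would be followed by too large a value. -/
lemma no_011 {q : ℝ} (hq : 1 < q) (hq2 : q ≤ 7 / 4) {d : ℕ → ℕ} (hd : Univoque q d) {n : ℕ}
    (h0 : d n = 0) (h1 : d (n + 1) = 1) : d (n + 2) = 0 := by
  rcases Nat.le_one_iff_eq_zero_or_eq_one.1 (hd.1 (n + 2)) with a | a
  · exact a
  exfalso
  have c0 := (hd.2 n).1 h0
  have c2 := (hd.2 (n + 2)).2 a
  rw [val_step hq (sh_le hd.1 _), sh_sh, val_step hq (sh_le hd.1 _), sh_sh] at c0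
  have e1 : sh (n + 1) d 0 = 1 := by simpa [sh] using h1
  have e2 : sh (1 + (n + 1)) d 0 = 1 := by
    rw [show 1 + (n + 1) = n + 2 by ring]; simpa [sh] using a
  rw [e1, e2, show 1 + (1 + (n + 1)) = n + 2 + 1 by ring] at c0
  set v := val q (sh (n + 2 + 1) d)
  have hq0 : 0 < q := by linarith
  have hq1 : 0 < q - 1 := by linarith
  rw [div_lt_one hq0, Nat.cast_one, ← lt_sub_iff_add_lt', div_lt_iff₀ hq0] at c0
  have hv : 1 / (q - 1) - 1 < v := by linarith
  have : 1 / (q - 1) < (q - 1) * q := by linarith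
  rw [div_lt_iff₀ hq1] at this
  nlinarith [mul_nonneg hq0.le (sq_nonneg (q - 7 / 4)), sq_nonneg (q - 7 / 4)]

lemma no_100 {q : ℝ} (hq : 1 < q) (hq2 : q ≤ 7 / 4) {d : ℕ → ℕ} (hd : Univoque q d) {n : ℕ}
    (h0 : d n = 1) (h1 : d (n + 1) = 0) : d (n + 2) = 1 := by
  rcases Nat.le_one_iff_eq_zero_or_eq_one.1 (hd.1 (n + 2)) with a | a
  swap
  · exact a
  exfalso
  have c0 := (hd.2 n).2 h0
  have c2 := (hd.2 (n + 2)).1 a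
  rw [val_step hq (sh_le hd.1 _), sh_sh, val_step hq (sh_le hd.1 _), sh_sh] at c0
  have e1 : sh (n + 1) d 0 = 0 := by simpa [sh] using h1
  have e2 : sh (1 + (n + 1)) d 0 = 0 := by
    rw [show 1 + (n + 1) = n + 2 by ring]; simpa [sh] using a
  rw [e1, e2, show 1 + (1 + (n + 1)) = n + 2 + 1 by ring] at c0
  set v := val q (sh (n + 2 + 1) d)
  have hq0 : 0 < q := by linarith
  have hq1 : 0 < q - 1 := by linarith
  simp only [Nat.cast_zero, zero_add] at c0
  have hv : v / q / q < 1 / q / q := by gcongr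
  have : 1 / (q - 1) < 1 + 1 / q / q := by linarith
  rw [div_lt_iff₀ hq1, div_div] at this
  have h3 : (1 + 1 / (q * q)) * (q - 1) * (q * q) = (q * q + 1) * (q - 1) := by
    field_simp
  have h4 : 1 * (q * q) < (1 + 1 / (q * q)) * (q - 1) * (q * q) := by gcongr
  rw [h3] at h4
  nlinarith [mul_nonneg hq0.le (sq_nonneg (q - 7 / 4)), sq_nonneg (q - 7 / 4)]

lemma val_zeros {q : ℝ} (hq : 1 < q) {d : ℕ → ℕ} (hd : ∀ i, d i ≤ 1) :
    ∀ k, (∀ i < k, d i = 0) → val q d * q ^ k = val q (sh k d) := by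
  intro k
  have hq0 : q ≠ 0 := by linarith
  induction k with
  | zero => intro _; simp [sh_zero]
  | succ k ih =>
    intro h
    rw [pow_succ, ← mul_assoc, ih fun i hi => h i (by omega), val_step hq (sh_le hd k), sh_sh]
    have : sh k d 0 = 0 := by simpa [sh] using h k (by omega)
    rw [this, add_comm 1 k]
    field_simp
    simp

/-- For `x < 1/2` and bases at most `7/4` the only possible unique expansions
are `0^k(10)^∞`. -/
lemma small_base {q x : ℝ} (hx : 0 < x) (hx2 : x < 1 / 2) (hq : q ∈ UnivSet x) (hq2 : q ≤ 7 / 4) :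
    ∃ k : ℕ, x * q ^ k = q / (q ^ 2 - 1) ∧ q / (q ^ 2 - 1) < 1 := by
  obtain ⟨h1, -, d, hd, rfl⟩ := mem_univSet.1 hq
  have hex : ∃ k, d k = 1 := by
    by_contra! h
    have h0 : ∀ i, d i = 0 := fun i => by have := hd.1 i; have := h i; omega
    have : val q d = 0 := by simp [val, h0]
    linarith
  classical
  obtain ⟨k, hk, hmin⟩ : ∃ k, d k = 1 ∧ ∀ i < k, d i = 0 :=
    ⟨Nat.find hex, Nat.find_spec hex, fun i hi => by
      have := hd.1 i; have := Nat.find_min hex hi; omega⟩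
  cases k with
  | zero =>
    exfalso
    rw [val_step h1 hd.1, hk, div_lt_iff₀ (by linarith)] at hx2
    have := val_nonneg h1 (sh 1 d)
    push_cast at hx2
    linarith
  | succ k =>
    have hp : ∀ j, d (k + 2 * j) = 0 ∧ d (k + 2 * j + 1) = 1 := by
      intro j
      induction j with
      | zero => exact ⟨hmin k (by omega), hk⟩
      | succ j ih =>
        have a := no_011 h1 hq2 hd ih.1 ih.2
        exact ⟨a, no_100 h1 hq2 hd ih.2 a⟩
    have he : sh (k + 1) d = alt := by
      funext i
      obtain ⟨j, rfl | rfl⟩ := i.even_or_odd'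
      · rw [sh, show 2 * j + (k + 1) = k + 2 * j + 1 by ring, (hp j).2]
        unfold alt; omega
      · rw [sh, show 2 * j + 1 + (k + 1) = k + 2 * (j + 1) by ring, (hp (j + 1)).1]
        unfold alt; omega
    refine ⟨k + 1, ?_, ?_⟩
    · rw [val_zeros h1 hd.1 _ hmin, he, val_alt h1]
    · rw [← val_alt h1, ← he]
      exact (hd.2 k).1 (hmin k (by omega))

/-- Strict lower bound near zero. For fixed `x` only finitely many `k` are relevant, and the bases
with unique expansion `0^k(10)^∞` stay away from the golden ratio. -/
lemma qG_lt_qs {x : ℝ} (hx : 0 < x) (hx2 : x < 1 / 2) : qG < qs x := by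
  have hG := qG_gt
  have hG' := qG_lt
  obtain ⟨K, hK1, hK2⟩ := exists_pow_near hx (by linarith)
  have hcont : ContinuousAt (fun t : ℝ => t / (t ^ 2 - 1) - x * t ^ K) qG := by
    refine ContinuousAt.sub (continuousAt_id.div (by fun_prop) ?_) (by fun_prop)
    nlinarith
  have hev : ∀ᶠ t in 𝓝 qG, 0 < t / (t ^ 2 - 1) - x * t ^ K :=
    hcont.eventually_const_lt (by simp only [qG_alt]; linarith)
  obtain ⟨b, hb, hbt⟩ := (mem_nhdsGE_iff_exists_Ico_subset' (show qG < 7 / 4 by linarith)).1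
    (nhdsWithin_le_nhds hev)
  have hb' : qG < min b (7 / 4) := lt_min hb (by linarith)
  refine hb'.trans_le (le_csInf (univSet_nonempty hx) fun q hq => ?_)
  by_contra! hlt
  have hqb := hlt.trans_le (min_le_left _ _)
  have hq7 := hlt.trans_le (min_le_right _ _)
  obtain ⟨k, hk, ha⟩ := small_base hx hx2 hq hq7.le
  have hq1 := hq.1.1
  have hqG := (alt_lt_one_iff hq1).1 ha
  have hkK : k ≤ K := by
    by_contra! h
    have h3 : qG ^ (K + 1) ≤ qG ^ k := pow_le_pow_right₀ (by linarith) h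
    have h4 : qG ^ k ≤ q ^ k := by gcongr
    have h5 : x * qG ^ (K + 1) ≤ x * q ^ k := by gcongr; exact h3.trans h4
    linarith
  have h6 : 0 < q / (q ^ 2 - 1) - x * q ^ K := hbt ⟨hqG.le, hqb⟩
  have h7 : x * q ^ k ≤ x * q ^ K := by gcongr; exact hq1.le
  linarith

/-! ### Semicontinuity and the level sets -/

lemma one_le_qs {x : ℝ} (hx : 0 < x) : 1 ≤ qs x :=
  le_csInf (univSet_nonempty hx) fun _ h => h.1.1.le

lemma qs_usc {x c : ℝ} (hx : 0 < x) (hc : qs x < c) : ∀ᶠ y in 𝓝 x, qs y < c := by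
  obtain ⟨δ, hδ, h⟩ := qs_right_usc hx (univSet_nonempty hx) hc
  have h1 := one_le_qs hx
  have hc0 : 0 < c := by linarith
  have hl : x * qs x / c < x := by rw [div_lt_iff₀ hc0]; gcongr
  filter_upwards [Ioo_mem_nhds hl (show x < x + δ by linarith), lt_mem_nhds hx] with y hy hy0
  rcases lt_trichotomy y x with hyx | rfl | hyx
  · have h2 := mul_qs_mono hy0 hyx.le (univSet_nonempty hx)
    have h3 := hy.1
    rw [div_lt_iff₀ hc0] at h3
    by_contra! h4
    have : y * c ≤ y * qs y := by gcongr
    linarith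
  · exact hc
  · exact h y hyx hy.2

/-- Lower semicontinuity from the right. -/
lemma qs_right_lsc {x c : ℝ} (hx : 0 < x) (hc : c < qs x) : ∀ᶠ y in 𝓝[>] x, c < qs y := by
  have hcont : ContinuousAt (fun y => y * c) x := by fun_prop
  have hlt : x * c < x * qs x := by gcongr
  filter_upwards [(hcont.eventually_lt_const hlt).filter_mono nhdsWithin_le_nhds,
    self_mem_nhdsWithin] with y hy hxy
  have hy0 : 0 < y := hx.trans hxy
  have := mul_qs_mono hx (le_of_lt hxy) (univSet_nonempty hy0)
  exact lt_of_mul_lt_mul_left (hy.trans_le this) hy0.le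

lemma qs_le_one_add {x : ℝ} (hx : 1 ≤ x) : qs x ≤ 1 + 1 / x := qs_le (mem_univSet_one hx)

lemma superlevel_bdd {q : ℝ} (hq : 1 < q) {x : ℝ} (hx : 0 < x) (h : q ≤ qs x) :
    x ≤ max 1 (1 / (q - 1)) := by
  rcases le_or_gt x 1 with h1 | h1
  · exact h1.trans (le_max_left _ _)
  · refine le_trans ?_ (le_max_right _ _)
    have h2 := qs_le_one_add h1.le
    rw [le_div_iff₀ (by linarith)]
    have h3 : x * (q - 1) ≤ x * (1 / x) := by gcongr; linarith
    rwa [mul_one_div_cancel hx.ne'] at h3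

/-- `q_s` attains a maximum at some `x* > 0`, and for every
`q ∈ (1, q_max]` the level set `L(q)` is nonempty with a smallest and a
largest element. -/
theorem qs_max_exists_and_levelSets :
    ∃ xstar : ℝ, 0 < xstar ∧ (∀ x : ℝ, 0 < x → qs x ≤ qs xstar) ∧
      ∀ q : ℝ, 1 < q → q ≤ qs xstar →
        (∃ a ∈ levelSet q, ∀ y ∈ levelSet q, a ≤ y) ∧
        (∃ b ∈ levelSet q, ∀ y ∈ levelSet q, y ≤ b) := by
  have hG := qG_gt
  have hquarter : qG < qs (1 / 4) := qG_lt_qs (by norm_num) (by norm_num)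
  obtain ⟨xs, hxs, hmax⟩ : ∃ xs : ℝ, 0 < xs ∧ ∀ x : ℝ, 0 < x → qs x ≤ qs xs := by
    obtain ⟨δ, hδ, hnear⟩ := qs_lt_near_zero hquarter
    set M := max 1 (1 / (qs (1 / 4) - 1))
    have hδ4 : δ ≤ 1 / 4 := by
      by_contra! h
      exact lt_irrefl _ (hnear (1 / 4) (by norm_num) h)
    have hM : 1 / 4 ≤ M := le_trans (by norm_num) (le_max_left _ _)
    have husc : UpperSemicontinuousOn qs (Set.Icc δ M) := fun x hx c hc =>
      (qs_usc (hδ.trans_le hx.1) hc).filter_mono nhdsWithin_le_nhds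
    obtain ⟨xs, hxs, hm⟩ := husc.exists_isMaxOn (nonempty_Icc.2 (hδ4.trans hM)) isCompact_Icc
    refine ⟨xs, hδ.trans_le hxs.1, fun x hx => ?_⟩
    have h4 : qs (1 / 4) ≤ qs xs := isMaxOn_iff.1 hm _ ⟨hδ4, hM⟩
    by_cases h : qs x < qs (1 / 4)
    · linarith
    · push Not at h
      refine isMaxOn_iff.1 hm _ ⟨?_, superlevel_bdd (by linarith) hx h⟩
      by_contra! hlt
      linarith [hnear x hx hlt]
  refine ⟨xs, hxs, hmax, fun q hq1 hqs => ?_⟩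
  have hlargest : ∃ b ∈ levelSet q, ∀ y ∈ levelSet q, y ≤ b := by
    -- the last point where `q_s ≥ q`
    set S : Set ℝ := {x | 0 < x ∧ q ≤ qs x} with hS
    have hne : S.Nonempty := ⟨xs, hxs, hqs⟩
    have hbdd : BddAbove S := ⟨_, fun x hx => superlevel_bdd hq1 hx.1 hx.2⟩
    have hlub := isLUB_csSup hne hbdd
    set b := sSup S
    have hb0 : 0 < b := hxs.trans_le (hlub.1 ⟨hxs, hqs⟩)
    have hge : q ≤ qs b := by
      by_contra! h
      obtain ⟨x, hx, hxS⟩ := ((hlub.frequently_mem hne).and_eventually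
        ((qs_usc hb0 h).filter_mono nhdsWithin_le_nhds)).exists
      linarith [hx.2]
    have hle : qs b ≤ q := by
      by_contra! h
      obtain ⟨x, hx, hbx⟩ := ((qs_right_lsc hb0 h).and self_mem_nhdsWithin).exists
      have hbx' : b < x := hbx
      linarith [hlub.1 (show x ∈ S from ⟨hb0.trans hbx', hx.le⟩)]
    exact ⟨b, ⟨hb0, le_antisymm hle hge⟩, fun y hy => hlub.1 ⟨hy.1, hy.2.ge⟩⟩
  refine ⟨?_, hlargest⟩
  obtain ⟨b, hb, -⟩ := hlargest
  have hne : (levelSet q).Nonempty := ⟨b, hb⟩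
  -- the level set stays away from `0`
  obtain ⟨δ, hδ, hfar⟩ : ∃ δ > 0, ∀ y ∈ levelSet q, δ ≤ y := by
    rcases le_or_gt q qG with h | h
    · refine ⟨1 / 2, by norm_num, fun y hy => ?_⟩
      by_contra! hlt
      linarith [qG_lt_qs hy.1 hlt, hy.2]
    · obtain ⟨δ, hδ, hnear⟩ := qs_lt_near_zero h
      refine ⟨δ, hδ, fun y hy => ?_⟩
      by_contra! hlt
      linarith [hnear y hy.1 hlt, hy.2]
  have hglb := isGLB_csInf hne ⟨δ, hfar⟩
  set a := sInf (levelSet q)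
  have ha0 : 0 < a := hδ.trans_le (hglb.2 hfar)
  refine ⟨a, ?_, hglb.1⟩
  by_contra hnot
  have hfreq : ∃ᶠ x in 𝓝[>] a, x ∈ levelSet q := by
    refine frequently_nhdsWithin_iff.2 ?_
    have := frequently_nhdsWithin_iff.1 (hglb.frequently_mem hne)
    refine this.mono fun x hx => ⟨hx.1, ?_⟩
    have hax : a ≤ x := hx.2
    exact lt_of_le_of_ne hax fun h => hnot (h ▸ hx.1)
  rcases lt_trichotomy (qs a) q with h | h | h
  · obtain ⟨x, hx, hxa⟩ := (hfreq.and_eventually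
      ((qs_usc ha0 h).filter_mono nhdsWithin_le_nhds)).exists
    linarith [hx.2]
  · exact hnot ⟨ha0, h⟩
  · obtain ⟨x, hx, hxa⟩ := (hfreq.and_eventually (qs_right_lsc ha0 h)).exists
    linarith [hx.2]
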